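/- arXiv:2102.05538 — 2 statements merged into one kernel-verified Lean document; each statement's English description precedes it below -/
import Mathlib

section
/- Collapsing preserves the Dirichlet pairing: suppose f, g : 𝓗 → ℝ are both constant on E, with collapses f̄, ḡ : 𝓗̄ → ℝ. Then ⟨g, −𝓛f⟩_μ = ⟨ḡ, −𝓛̄f̄⟩_μ̄, where ⟨u,v⟩_μ = ∑_x μ(x)u(x)v(x) and ⟨u,v⟩_μ̄ = ∑_{x∈𝓗̄} μ̄(x)u(x)v(x). In particular, taking g = f, the Dirichlet forms agree: 𝓓̄(f̄) = 𝓓(f). -/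
/-!
Split every sum over `H` into its part on `E` and its part off `E`, and every sum over the
collapsed space into the term at the collapsed point and the part off `E`. Off `E` the collapsed
generator of the collapse of `f` coincides with the generator of `f` (`jumpGen_collapse_some`),
since `f` is constant on `E` and the rates into `E` add up. At the collapsed point, multiplying by
`μ(E)` turns the averaged rates into the `μ`-weighted sum over `E` of the generator
(`mul_jumpGen_collapse_none`), the jumps inside `E` contributing nothing; this sum is all that
the pairing sees there, because `g` is constant on `E`. The equality of Dirichlet forms is the
case `g = f`.
-/

open Finset

section Setup

variable {H : Type*}

/-- The generator of the Markov chain with jump rates `r`: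
`(𝓛 f)(x) = ∑ y, r x y * (f y - f x)`. -/
noncomputable def jumpGen {X : Type*} [Fintype X] (r : X → X → ℝ) (f : X → ℝ)
    (x : X) : ℝ :=
  ∑ y, r x y * (f y - f x)

/-- The Dirichlet form `𝓓(f) = ∑ x, μ x * f x * (-(𝓛 f) x)`. -/
noncomputable def dirForm {X : Type*} [Fintype X] (μ : X → ℝ) (r : X → X → ℝ)
    (f : X → ℝ) : ℝ :=
  ∑ x, μ x * f x * (-jumpGen r f x)

/-- Irreducibility of the rates. -/
def IrreducibleRates (r : H → H → ℝ) : Prop :=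
  ∀ x y : H, x ≠ y → ∃ (n : ℕ) (z : ℕ → H),
    z 0 = x ∧ z n = y ∧ ∀ i < n, 0 < r (z i) (z (i + 1))

variable [DecidableEq H]

/-- The collapsed jump rates on `𝓗̄ = (𝓗 ∖ E) ∪ {𝔢}` (with `𝔢` encoded as
`none`): `r̄(x,y) = r(x,y)`, `r̄(x,𝔢) = ∑_{z∈E} r(x,z)`,
`r̄(𝔢,y) = (∑_{z∈E} μ(z) r(z,y)) / μ(E)`. -/
noncomputable def rbar (μ : H → ℝ) (r : H → H → ℝ) (E : Finset H) :
    Option {x : H // x ∉ E} → Option {x : H // x ∉ E} → ℝ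
  | some x, some y => r x.1 y.1
  | some x, none => ∑ z ∈ E, r x.1 z
  | none, some y => (∑ z ∈ E, μ z * r z y.1) / ∑ z ∈ E, μ z
  | none, none => 0

/-- The collapsed measure: `μ̄(x) = μ(x)` off `E` and `μ̄(𝔢) = μ(E)`. -/
noncomputable def mubar (μ : H → ℝ) (E : Finset H) :
    Option {x : H // x ∉ E} → ℝ
  | some x => μ x.1
  | none => ∑ z ∈ E, μ z

/-- The collapse of a function `f : 𝓗 → ℝ` which is constant on `E` with value
`cf`: it equals `f` off `E` and `cf` at `𝔢`. -/
noncomputable def collapseFun (E : Finset H) (f : H → ℝ) (cf : ℝ) :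
    Option {x : H // x ∉ E} → ℝ
  | some x => f x.1
  | none => cf

end Setup

theorem sum_eq_sum_mem_add_sum_subtype {H : Type*} [Fintype H] [DecidableEq H]
    (E : Finset H) (F : H → ℝ) :
    ∑ x, F x = ∑ x ∈ E, F x + ∑ x : {x : H // x ∉ E}, F x.1 := by
  rw [← Finset.sum_add_sum_compl E F]
  congr 1
  exact Finset.sum_subtype _ (fun x => by simp) F

theorem jumpGen_collapse_some {H : Type*} [Fintype H] [DecidableEq H]
    (r : H → H → ℝ) (μ : H → ℝ) (E : Finset H) (f : H → ℝ) (cf : ℝ)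
    (hf : ∀ x ∈ E, f x = cf) (x : {x : H // x ∉ E}) :
    jumpGen (rbar μ r E) (collapseFun E f cf) (some x) = jumpGen r f x.1 := by
  unfold jumpGen
  rw [Fintype.sum_option, sum_eq_sum_mem_add_sum_subtype E]
  simp only [rbar, collapseFun]
  congr 1
  rw [Finset.sum_mul]
  exact Finset.sum_congr rfl fun z hz => by rw [hf z hz]

theorem mul_jumpGen_collapse_none {H : Type*} [Fintype H] [DecidableEq H]
    (r : H → H → ℝ) (μ : H → ℝ) (E : Finset H) (hE : ∑ z ∈ E, μ z ≠ 0)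
    (f : H → ℝ) (cf : ℝ) (hf : ∀ x ∈ E, f x = cf) :
    (∑ z ∈ E, μ z) * jumpGen (rbar μ r E) (collapseFun E f cf) none
      = ∑ z ∈ E, μ z * jumpGen r f z := by
  have h : ∀ z ∈ E, μ z * jumpGen r f z
      = ∑ y : {x : H // x ∉ E}, μ z * r z y.1 * (f y.1 - cf) := by
    intro z hz
    have h0 : ∑ y ∈ E, r z y * (f y - f z) = 0 :=
      Finset.sum_eq_zero fun y hy => by rw [hf y hy, hf z hz]; ring
    unfold jumpGen
    rw [sum_eq_sum_mem_add_sum_subtype E, h0, zero_add, Finset.mul_sum, hf z hz]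
    exact Finset.sum_congr rfl fun y _ => by ring
  rw [Finset.sum_congr rfl h, Finset.sum_comm]
  unfold jumpGen
  rw [Fintype.sum_option]
  simp only [rbar, collapseFun, zero_mul, zero_add]
  rw [Finset.mul_sum]
  refine Finset.sum_congr rfl fun y _ => ?_
  rw [← Finset.sum_mul]
  field_simp

theorem pairing_collapse {H : Type*} [Fintype H] [DecidableEq H]
    (r : H → H → ℝ) (μ : H → ℝ) (E : Finset H) (hE : ∑ z ∈ E, μ z ≠ 0)
    (f g : H → ℝ) (cf cg : ℝ)
    (hf : ∀ x ∈ E, f x = cf) (hg : ∀ x ∈ E, g x = cg) :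
    (∑ x, μ x * g x * (-jumpGen r f x))
        = ∑ o, mubar μ E o * collapseFun E g cg o *
            (-jumpGen (rbar μ r E) (collapseFun E f cf) o) := by
  rw [Fintype.sum_option, sum_eq_sum_mem_add_sum_subtype E]
  simp only [jumpGen_collapse_some r μ E f cf hf]
  simp only [mubar, collapseFun]
  congr 1
  calc ∑ x ∈ E, μ x * g x * (-jumpGen r f x)
      = ∑ x ∈ E, (-cg) * (μ x * jumpGen r f x) :=
        Finset.sum_congr rfl fun x hx => by rw [hg x hx]; ring
    _ = _ := by
        rw [← Finset.mul_sum, ← mul_jumpGen_collapse_none r μ E hE f cf hf]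
        ring

/-- **Collapsing preserves the Dirichlet pairing**: if `f, g : 𝓗 → ℝ` are
constant on `E` with values `cf, cg`, then
`⟨g, -𝓛f⟩_μ = ⟨ḡ, -𝓛̄ f̄⟩_μ̄`; in particular the Dirichlet forms agree,
`𝓓̄(f̄) = 𝓓(f)`. -/
theorem collapsed_dirichlet_pairing
    {H : Type*} [Fintype H] [DecidableEq H]
    (r : H → H → ℝ) (μ : H → ℝ)
    (hr_nonneg : ∀ x y, 0 ≤ r x y) (hr_diag : ∀ x, r x x = 0)
    (hμ_pos : ∀ x, 0 < μ x) (hμ_sum : ∑ x, μ x = 1)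
    (hstat : ∀ y, ∑ x, μ x * r x y = μ y * ∑ x, r y x)
    (E : Finset H) (hE : E.Nonempty) (hEuniv : E ≠ Finset.univ)
    (f g : H → ℝ) (cf cg : ℝ)
    (hf : ∀ x ∈ E, f x = cf) (hg : ∀ x ∈ E, g x = cg) :
    (∑ x, μ x * g x * (-jumpGen r f x))
        = (∑ o, mubar μ E o * collapseFun E g cg o *
            (-jumpGen (rbar μ r E) (collapseFun E f cf) o)) ∧
    dirForm (mubar μ E) (rbar μ r E) (collapseFun E f cf) = dirForm μ r f := by
  have hE' : ∑ z ∈ E, μ z ≠ 0 := (Finset.sum_pos (fun z _ => hμ_pos z) hE).ne'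
  exact ⟨pairing_collapse r μ E hE' f g cf cg hf hg,
    (pairing_collapse r μ E hE' f f cf cf hf hf).symm⟩
end

section
/- Capacity is preserved under collapsing: for every nonempty A ⊆ 𝓗 ∖ E, the capacity between 𝔢 and A with respect to the collapsed chain equals the capacity between E and A with respect to the original chain: cap̄(𝔢, A) = cap(E, A), i.e., 𝓓̄(h̄_{𝔢,A}) = 𝓓(h_{E,A}). -/
/-!
Extend `hbar` to `H` by the value `hbar 𝔢` on `E`. For a function constant on `E`, collapsing
changes neither the generator off `E` (`jumpGen_collapse`) nor the Dirichlet form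
(`dirForm_collapse`): jumps inside `E` contribute nothing, and the weights `μ z / μ(E)` in the rates
out of `𝔢` cancel against the mass `μ(E)` of `𝔢`. Hence the extension of `hbar` solves the boundary
value problem defining `h`, and equals `h` by the maximum principle (`nonpos_of_harmonic`), which is
where irreducibility enters.
-/

open Finset

/-- Pull-back to `H` of a function on the collapsed space: constant on `E` with the value at `𝔢`. -/
noncomputable def liftFun {H : Type*} [DecidableEq H] (E : Finset H)
    (f : Option {x : H // x ∉ E} → ℝ) (x : H) : ℝ :=
  if hx : x ∈ E then f none else f (some ⟨x, hx⟩)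

lemma liftFun_mem {H : Type*} [DecidableEq H] {E : Finset H}
    (f : Option {x : H // x ∉ E} → ℝ) {x : H} (hx : x ∈ E) : liftFun E f x = f none :=
  dif_pos hx

lemma liftFun_coe {H : Type*} [DecidableEq H] {E : Finset H}
    (f : Option {x : H // x ∉ E} → ℝ) (x : {x : H // x ∉ E}) :
    liftFun E f x.1 = f (some x) :=
  dif_neg x.2

lemma sum_split {H : Type*} [Fintype H] [DecidableEq H] (E : Finset H) (f : H → ℝ) :
    ∑ x, f x = ∑ x ∈ E, f x + ∑ x : {x : H // x ∉ E}, f x.1 := by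
  rw [← Finset.sum_add_sum_compl E f]
  congr 1
  exact Finset.sum_subtype _ (fun x => Finset.mem_compl) f

lemma jumpGen_collapse {H : Type*} [Fintype H] [DecidableEq H] (r : H → H → ℝ) (μ : H → ℝ)
    (E : Finset H) (f : Option {x : H // x ∉ E} → ℝ) (x : {x : H // x ∉ E}) :
    jumpGen (rbar μ r E) f (some x) = jumpGen r (liftFun E f) x.1 := by
  unfold jumpGen
  rw [sum_split E, Fintype.sum_option]
  simp only [rbar, liftFun_coe]
  rw [Finset.sum_mul]
  congr 1
  exact Finset.sum_congr rfl fun z hz => by rw [liftFun_mem f hz]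

lemma dirForm_collapse {H : Type*} [Fintype H] [DecidableEq H] (r : H → H → ℝ) (μ : H → ℝ)
    (E : Finset H) (hE : ∑ z ∈ E, μ z ≠ 0) (f : Option {x : H // x ∉ E} → ℝ) :
    dirForm (mubar μ E) (rbar μ r E) f = dirForm μ r (liftFun E f) := by
  unfold dirForm
  rw [sum_split E, Fintype.sum_option]
  simp only [jumpGen_collapse, mubar, liftFun_coe]
  congr 1
  have h1 : ∀ z ∈ E, μ z * liftFun E f z * (-jumpGen r (liftFun E f) z)
      = -f none * ∑ y : {x : H // x ∉ E}, μ z * r z y.1 * (f (some y) - f none) := by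
    intro z hz
    unfold jumpGen
    rw [sum_split E, liftFun_mem f hz]
    -- jumps from `E` into `E` do not change the value of the lifted function
    rw [Finset.sum_eq_zero (s := E) fun y hy => by rw [liftFun_mem f hy]; ring]
    simp only [liftFun_coe, mul_assoc]
    rw [← Finset.mul_sum]
    ring
  rw [Finset.sum_congr rfl h1, ← Finset.mul_sum, Finset.sum_comm]
  have h2 : (∑ z ∈ E, μ z) * jumpGen (rbar μ r E) f none
      = ∑ y : {x : H // x ∉ E}, ∑ z ∈ E, μ z * r z y.1 * (f (some y) - f none) := by
    unfold jumpGen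
    rw [Fintype.sum_option]
    simp only [rbar, zero_mul, zero_add]
    rw [Finset.mul_sum]
    refine Finset.sum_congr rfl fun y _ => ?_
    rw [← Finset.sum_mul]
    field_simp
  rw [← h2]
  ring

/-- Maximum principle: if `u` is harmonic off `B` and nonpositive on the nonempty set `B`, then
`u ≤ 0`. A positive maximum would propagate along a path of positive rates into `B`. -/
lemma nonpos_of_harmonic {H : Type*} [Fintype H] (r : H → H → ℝ)
    (hr_nonneg : ∀ x y, 0 ≤ r x y) (hirr : IrreducibleRates r)
    (B : Finset H) (hB : B.Nonempty) (u : H → ℝ) (huB : ∀ x ∈ B, u x ≤ 0)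
    (hu : ∀ x, x ∉ B → jumpGen r u x = 0) (x : H) : u x ≤ 0 := by
  obtain ⟨b, hb⟩ := hB
  obtain ⟨m, -, hm⟩ := Finset.exists_max_image Finset.univ u ⟨b, Finset.mem_univ b⟩
  by_contra! hx
  have hmpos : 0 < u m := hx.trans_le (hm x (Finset.mem_univ x))
  have hmb : m ≠ b := fun hmb => (huB b hb).not_gt (hmb ▸ hmpos)
  obtain ⟨n, z, hz0, hzn, hz⟩ := hirr m b hmb
  have key : ∀ i ≤ n, u (z i) = u m := by
    intro i
    induction i with
    | zero => intro _; rw [hz0]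
    | succ i ih =>
      intro hi
      have hzi := ih (by omega)
      have hnB : z i ∉ B := fun hmem => (huB _ hmem).not_gt (hzi ▸ hmpos)
      have hsum := hu _ hnB
      unfold jumpGen at hsum
      -- every summand is nonpositive at a maximum, so each of them vanishes
      have hterm := (Finset.sum_eq_zero_iff_of_nonpos fun y _ =>
        mul_nonpos_of_nonneg_of_nonpos (hr_nonneg (z i) y)
          (by rw [hzi]; exact sub_nonpos.2 (hm y (Finset.mem_univ y)))).1 hsum
          (z (i + 1)) (Finset.mem_univ _)
      rcases mul_eq_zero.1 hterm with h0 | h0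
      · exact absurd h0 (hz i (by omega)).ne'
      · linarith
  have hbm := key n le_rfl
  rw [hzn] at hbm
  linarith [huB b hb]

lemma jumpGen_sub {H : Type*} [Fintype H] (r : H → H → ℝ) (f g : H → ℝ) (x : H) :
    jumpGen r (fun y => f y - g y) x = jumpGen r f x - jumpGen r g x := by
  unfold jumpGen
  rw [← Finset.sum_sub_distrib]
  exact Finset.sum_congr rfl fun y _ => by ring

/-- **Capacity is preserved under collapsing**: for nonempty `A ⊆ 𝓗 ∖ E`,
the capacity between the collapsed point `𝔢` and `A` with respect to the
collapsed chain equals the capacity between `E` and `A` with respect to the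
original chain: `cap̄(𝔢, A) = cap(E, A)`, i.e. `𝓓̄(h̄_{𝔢,A}) = 𝓓(h_{E,A})`.
Here `h` is the equilibrium potential between `E` and `A` for the original
chain and `hbar` the equilibrium potential between `𝔢` and `A` for the
collapsed chain. -/
theorem collapsed_capacity
    {H : Type*} [Fintype H] [DecidableEq H]
    (r : H → H → ℝ) (μ : H → ℝ)
    (hr_nonneg : ∀ x y, 0 ≤ r x y) (hr_diag : ∀ x, r x x = 0)
    (hirr : IrreducibleRates r)
    (hμ_pos : ∀ x, 0 < μ x) (hμ_sum : ∑ x, μ x = 1)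
    (hstat : ∀ y, ∑ x, μ x * r x y = μ y * ∑ x, r y x)
    (E : Finset H) (hE : E.Nonempty) (hEuniv : E ≠ Finset.univ)
    (A : Finset H) (hA : A.Nonempty) (hAE : Disjoint A E)
    (h : H → ℝ)
    (hhE : ∀ x ∈ E, h x = 1) (hhA : ∀ x ∈ A, h x = 0)
    (hhharm : ∀ x, x ∉ E ∪ A → jumpGen r h x = 0)
    (hbar : Option {x : H // x ∉ E} → ℝ)
    (hbarE : hbar none = 1)
    (hbarA : ∀ x : {x : H // x ∉ E}, x.1 ∈ A → hbar (some x) = 0)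
    (hbarharm : ∀ x : {x : H // x ∉ E}, x.1 ∉ A →
      jumpGen (rbar μ r E) hbar (some x) = 0) :
    dirForm (mubar μ E) (rbar μ r E) hbar = dirForm μ r h := by
  have hcoe : ∀ x (hx : x ∉ E), liftFun E hbar x = hbar (some ⟨x, hx⟩) :=
    fun x hx => liftFun_coe hbar ⟨x, hx⟩
  have hbd : ∀ x ∈ E ∪ A, liftFun E hbar x = h x := by
    intro x hx
    by_cases hxE : x ∈ E
    · rw [liftFun_mem hbar hxE, hbarE, hhE x hxE]
    · have hxA : x ∈ A := (Finset.mem_union.1 hx).resolve_left hxE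
      rw [hcoe x hxE, hbarA ⟨x, hxE⟩ hxA, hhA x hxA]
  have hharm : ∀ x, x ∉ E ∪ A → jumpGen r (liftFun E hbar) x = 0 := by
    intro x hx
    rw [Finset.mem_union, not_or] at hx
    rw [← jumpGen_collapse r μ E hbar ⟨x, hx.1⟩]
    exact hbarharm ⟨x, hx.1⟩ hx.2
  have hne : (E ∪ A).Nonempty := hE.mono Finset.subset_union_left
  have heq : liftFun E hbar = h := by
    funext x
    have h1 := nonpos_of_harmonic r hr_nonneg hirr (E ∪ A) hne
      (fun y => liftFun E hbar y - h y) (fun y hy => by rw [hbd y hy, sub_self])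
      (fun y hy => by rw [jumpGen_sub, hharm y hy, hhharm y hy, sub_self]) x
    have h2 := nonpos_of_harmonic r hr_nonneg hirr (E ∪ A) hne
      (fun y => h y - liftFun E hbar y) (fun y hy => by rw [hbd y hy, sub_self])
      (fun y hy => by rw [jumpGen_sub, hharm y hy, hhharm y hy, sub_self]) x
    linarith
  rw [dirForm_collapse r μ E (Finset.sum_pos (fun z _ => hμ_pos z) hE).ne' hbar, heq]
end
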